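/- For all real a > 0 and δ > 0, (1/(4π)) ∫_{−∞}^{∞} (1/(r²+δ²) − 1/(r²+a²)) · ψ(1 + ir/2) dr = (1/4)·( ψ(1+δ/2)/δ − ψ(1+a/2)/a ), where both sides are real numbers (the equality holding in ℂ). -/

import Mathlib

/-!
The function `w ↦ ψ(1 + w/2)` is holomorphic on the closed right half-plane and grows only
logarithmically, so the Poisson formula there gives, for each `d > 0`,
`∫ ψ(1 + ir/2) / (r² + d²) dr = (π/d) ψ(1 + d/2)`; the theorem is the difference of the cases
`d = δ` and `d = a`.

The Poisson formula is obtained termwise from Euler's limit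
`ψ(s) = lim (log n - ∑_{j ≤ n} 1/(s + j))` (`tendsto_digammaSeq`). For constants and for the simple
fractions `1/(c + ir/2)` it is an explicit integral (`integral_kernel_mul_pole`), which gives
the formula for every approximant (`integral_kernel_mul_digammaSeq`). The approximants are bounded by
`C (1 + r²)^(1/4)` uniformly in `n` (`exists_norm_digammaSeq_le`), so dominated convergence passes
to the limit.

Euler's limit for `ψ` is the logarithmic derivative of Euler's limit `GammaSeq s n → Γ(s)`: since
`|GammaSeq s n| ≤ Γ(Re s)` locally uniformly, Cauchy's formula on a small circle and dominated
convergence show that the derivatives converge as well (`tendsto_deriv_GammaSeq`).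
-/

open MeasureTheory

/-- The digamma function `ψ(s) = Γ'(s)/Γ(s)`, the logarithmic derivative of the complex
Gamma function. -/
noncomputable def digamma (s : ℂ) : ℂ := deriv Complex.Gamma s / Complex.Gamma s

/-! ### Rational integrals over the line -/


lemma integrable_one_div_sq_add_sq {b : ℝ} (hb : 0 < b) :
    Integrable fun r : ℝ => 1 / (r ^ 2 + b ^ 2) := by
  have h := (integrable_inv_one_add_sq.comp_div hb.ne').const_mul (1 / b ^ 2)
  refine h.congr (Filter.Eventually.of_forall fun r => ?_)
  have : r ^ 2 + b ^ 2 ≠ 0 := by positivity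
  have : 1 + (r / b) ^ 2 ≠ 0 := by positivity
  simp only
  field_simp
  ring

lemma integral_one_div_sq_add_sq {b : ℝ} (hb : 0 < b) :
    ∫ r : ℝ, 1 / (r ^ 2 + b ^ 2) = Real.pi / b := by
  have h : ∀ r : ℝ, 1 / (r ^ 2 + b ^ 2) = 1 / b ^ 2 * (1 + (r / b) ^ 2)⁻¹ := fun r => by
    have : r ^ 2 + b ^ 2 ≠ 0 := by positivity
    have : 1 + (r / b) ^ 2 ≠ 0 := by positivity
    field_simp
    ring
  simp_rw [h]
  rw [integral_const_mul, Measure.integral_comp_div (fun x : ℝ => (1 + x ^ 2)⁻¹) b,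
    integral_univ_inv_one_add_sq, abs_of_pos hb, smul_eq_mul]
  field_simp

lemma integrable_inv_mul_inv {d b : ℝ} (hd : 0 < d) (hb : 0 < b) :
    Integrable fun r : ℝ => 1 / ((r ^ 2 + d ^ 2) * (r ^ 2 + b ^ 2)) := by
  refine ((integrable_one_div_sq_add_sq hd).mul_const (1 / b ^ 2)).mono'
    (Continuous.aestronglyMeasurable
      (continuous_const.div (by fun_prop) fun r => by positivity))
    (Filter.Eventually.of_forall fun r => ?_)
  rw [Real.norm_of_nonneg (by positivity), one_div_mul_one_div]
  gcongr
  nlinarith [sq_nonneg r]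

lemma integral_inv_mul_inv {d b : ℝ} (hd : 0 < d) (hb : 0 < b) :
    ∫ r : ℝ, 1 / ((r ^ 2 + d ^ 2) * (r ^ 2 + b ^ 2)) = Real.pi / (d * b * (d + b)) := by
  rcases eq_or_ne d b with rfl | hne
  · -- The coincident case, where the partial fraction decomposition degenerates.
    have hder : ∀ r : ℝ, HasDerivAt
        (fun r : ℝ => 1 / (2 * d ^ 2) * (r / (r ^ 2 + d ^ 2)) +
          1 / (2 * d ^ 3) * Real.arctan (r / d))
        (1 / ((r ^ 2 + d ^ 2) * (r ^ 2 + d ^ 2))) r := fun r => by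
      have h0 : r ^ 2 + d ^ 2 ≠ 0 := by positivity
      have h1 := ((hasDerivAt_id r).div (((hasDerivAt_id r).pow 2).add_const (d ^ 2)) h0).const_mul
        (1 / (2 * d ^ 2))
      have h2 := ((hasDerivAt_id r).div_const d).arctan.const_mul (1 / (2 * d ^ 3))
      refine (h1.add h2).congr_deriv ?_
      have h3 : 1 + (r / d) ^ 2 ≠ 0 := by positivity
      simp only [id]
      simp
      field_simp
      ring
    have hq : ∀ l : Filter ℝ, Filter.Tendsto (fun r : ℝ => |r|) l Filter.atTop →
        Filter.Tendsto (fun r : ℝ => 1 / (2 * d ^ 2) * (r / (r ^ 2 + d ^ 2))) l (nhds 0) := by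
      intro l hl
      refine squeeze_zero_norm (a := fun r => 1 / (2 * d ^ 2) * |r|⁻¹) (fun r => ?_) ?_
      · rw [norm_mul, Real.norm_of_nonneg (by positivity : 0 ≤ 1 / (2 * d ^ 2)), norm_div,
          Real.norm_of_nonneg (by positivity : 0 ≤ r ^ 2 + d ^ 2), Real.norm_eq_abs]
        gcongr
        rcases eq_or_ne r 0 with rfl | hr
        · simp
        rw [div_le_iff₀ (by positivity), inv_mul_eq_div, le_div_iff₀ (by positivity),
          abs_mul_abs_self]
        nlinarith [sq_nonneg d]
      · have h := (tendsto_inv_atTop_zero.comp hl).const_mul (1 / (2 * d ^ 2))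
        rwa [mul_zero] at h
    have hbot := (hq _ Filter.tendsto_abs_atBot_atTop).add (((tendsto_nhds_of_tendsto_nhdsWithin
      Real.tendsto_arctan_atBot).comp (Filter.tendsto_id.atBot_div_const hd)).const_mul
        (1 / (2 * d ^ 3)))
    have htop := (hq _ Filter.tendsto_abs_atTop_atTop).add (((tendsto_nhds_of_tendsto_nhdsWithin
      Real.tendsto_arctan_atTop).comp (Filter.tendsto_id.atTop_div_const hd)).const_mul
        (1 / (2 * d ^ 3)))
    rw [integral_of_hasDerivAt_of_tendsto hder (integrable_inv_mul_inv hd hd) hbot htop]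
    field_simp
    ring
  · have hne' : b ^ 2 - d ^ 2 ≠ 0 := by
      intro h
      exact hne ((pow_left_inj₀ hd.le hb.le two_ne_zero).1 (by linarith))
    have h : ∀ r : ℝ, 1 / ((r ^ 2 + d ^ 2) * (r ^ 2 + b ^ 2)) =
        1 / (b ^ 2 - d ^ 2) * (1 / (r ^ 2 + d ^ 2) - 1 / (r ^ 2 + b ^ 2)) := fun r => by
      have : r ^ 2 + b ^ 2 ≠ 0 := by positivity
      have : r ^ 2 + d ^ 2 ≠ 0 := by positivity
      field_simp
      ring
    simp_rw [h]
    rw [integral_const_mul, integral_sub (integrable_one_div_sq_add_sq hd)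
      (integrable_one_div_sq_add_sq hb), integral_one_div_sq_add_sq hd, integral_one_div_sq_add_sq hb]
    have h3 : b - d ≠ 0 := sub_ne_zero.2 hne.symm
    have : b ^ 2 - d ^ 2 = (b - d) * (d + b) := by ring
    rw [this]
    field_simp

lemma norm_one_div_add_le {c : ℝ} (hc : 0 < c) (r : ℝ) :
    ‖1 / ((c : ℂ) + Complex.I * r / 2)‖ ≤ 1 / c := by
  rw [norm_div, norm_one]
  gcongr
  refine le_trans ?_ (Complex.re_le_norm _)
  simp

lemma add_I_mul_ne_zero {c : ℝ} (hc : 0 < c) (r : ℝ) : (c : ℂ) + Complex.I * r / 2 ≠ 0 := by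
  intro h
  have := congrArg Complex.re h
  simp at this
  exact hc.ne' this

lemma integrable_kernel_mul_pole {d c : ℝ} (hd : 0 < d) (hc : 0 < c) :
    Integrable fun r : ℝ =>
      ((1 / (r ^ 2 + d ^ 2) : ℝ) : ℂ) * (1 / ((c : ℂ) + Complex.I * r / 2)) := by
  refine ((integrable_one_div_sq_add_sq hd).mul_const (1 / c)).mono'
    (Continuous.aestronglyMeasurable ?_) (Filter.Eventually.of_forall fun r => ?_)
  · refine (Complex.continuous_ofReal.comp ?_).mul ?_
    · exact continuous_const.div (by fun_prop) fun r => by positivity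
    · exact continuous_const.div (by fun_prop) (add_I_mul_ne_zero hc)
  · rw [norm_mul, Complex.norm_of_nonneg (by positivity)]
    gcongr
    exact norm_one_div_add_le hc r

/-- The Poisson formula at `d` for the function `w ↦ 1/(c + w/2)`, holomorphic on the closed right
half-plane. Averaging over `r ↦ -r` removes the odd imaginary part and leaves a real rational
integral. -/
lemma integral_kernel_mul_pole {d c : ℝ} (hd : 0 < d) (hc : 0 < c) :
    ∫ r : ℝ, ((1 / (r ^ 2 + d ^ 2) : ℝ) : ℂ) * (1 / ((c : ℂ) + Complex.I * r / 2)) =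
      Real.pi / d * (1 / (c + d / 2)) := by
  set f : ℝ → ℂ := fun r => ((1 / (r ^ 2 + d ^ 2) : ℝ) : ℂ) * (1 / ((c : ℂ) + Complex.I * r / 2))
  have hf : Integrable f := integrable_kernel_mul_pole hd hc
  have h1 : ∫ r, (f r + f (-r)) = 2 * ∫ r, f r := by
    rw [integral_add hf hf.comp_neg, integral_neg_eq_self]
    ring
  have h2 : ∀ r, f r + f (-r) =
      ((8 * c * (1 / ((r ^ 2 + d ^ 2) * (r ^ 2 + (2 * c) ^ 2))) : ℝ) : ℂ) := fun r => by
    have e1 := add_I_mul_ne_zero hc r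
    have e2 := add_I_mul_ne_zero hc (-r)
    have e3 : ((r ^ 2 + (2 * c) ^ 2 : ℝ) : ℂ) ≠ 0 := by
      exact_mod_cast (by positivity : r ^ 2 + (2 * c) ^ 2 ≠ 0)
    have e4 : ((r ^ 2 + d ^ 2 : ℝ) : ℂ) ≠ 0 := by
      exact_mod_cast (by positivity : r ^ 2 + d ^ 2 ≠ 0)
    have key : 1 / ((c : ℂ) + Complex.I * r / 2) + 1 / ((c : ℂ) + Complex.I * (-r : ℝ) / 2) =
        8 * c * (1 / ((r ^ 2 + (2 * c) ^ 2 : ℝ) : ℂ)) := by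
      rw [div_add_div _ _ e1 e2, mul_one_div, div_eq_div_iff (mul_ne_zero e1 e2) e3]
      push_cast
      linear_combination (2 * (c : ℂ) * r ^ 2) * Complex.I_sq
    simp only [f, neg_sq]
    rw [← mul_add, key]
    push_cast at e3 e4 ⊢
    field_simp
  simp_rw [h2] at h1
  rw [integral_complex_ofReal, integral_const_mul, integral_inv_mul_inv hd (by positivity)] at h1
  have h3 : ∫ r, f r = ((8 * c * (Real.pi / (d * (2 * c) * (d + 2 * c))) : ℝ) : ℂ) / 2 := by
    rw [h1]; ring
  rw [h3]
  have e5 : (c + d / 2 : ℂ) ≠ 0 := by exact_mod_cast (by positivity : c + d / 2 ≠ 0)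
  have e6 : (d + 2 * c : ℂ) ≠ 0 := by exact_mod_cast (by positivity : d + 2 * c ≠ 0)
  have e7 : (d : ℂ) ≠ 0 := by exact_mod_cast hd.ne'
  have e8 : (c : ℂ) ≠ 0 := by exact_mod_cast hc.ne'
  push_cast
  field_simp
  ring

/-! ### Euler's limit formula for the digamma function -/

/-- Euler's approximants are dominated by `Γ(Re s)`, because `(1 - x/n)^n ≤ e^(-x)` in their integral
representation. -/
lemma norm_GammaSeq_le {s : ℂ} (hs : 0 < s.re) {n : ℕ} (hn : n ≠ 0) :
    ‖Complex.GammaSeq s n‖ ≤ Real.Gamma s.re := by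
  have hn0 : (0 : ℝ) ≤ n := n.cast_nonneg
  rw [Complex.GammaSeq_eq_approx_Gamma_integral hs hn, Real.Gamma_eq_integral hs,
    intervalIntegral.integral_of_le hn0]
  have hint := Real.GammaIntegral_convergent hs
  have hsub : Set.Ioc (0 : ℝ) n ⊆ Set.Ioi 0 := Set.Ioc_subset_Ioi_self
  refine (norm_integral_le_of_norm_le (hint.mono_set hsub) ?_).trans
    (setIntegral_mono_set hint ?_ (Filter.Eventually.of_forall hsub))
  · filter_upwards [ae_restrict_mem measurableSet_Ioc] with x hx
    rw [norm_mul, Complex.norm_of_nonneg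
        (pow_nonneg (sub_nonneg.2 (div_le_one_of_le₀ hx.2 hn0)) _),
      Complex.norm_cpow_eq_rpow_re_of_pos hx.1, Complex.sub_re, Complex.one_re]
    have := Real.rpow_nonneg hx.1.le (s.re - 1)
    gcongr
    exact Real.one_sub_div_pow_le_exp_neg hx.2
  · filter_upwards [ae_restrict_mem measurableSet_Ioi] with x hx
    exact mul_nonneg (Real.exp_pos _).le (Real.rpow_nonneg (le_of_lt hx) _)

lemma add_natCast_ne_zero {s : ℂ} (hs : 0 < s.re) (j : ℕ) : s + j ≠ 0 := by
  intro h
  have h' := congrArg Complex.re h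
  simp at h'
  have : (0 : ℝ) ≤ j := j.cast_nonneg
  linarith

lemma differentiableAt_GammaSeq {s : ℂ} (hs : 0 < s.re) {n : ℕ} (hn : n ≠ 0) :
    DifferentiableAt ℂ (fun z => Complex.GammaSeq z n) s := by
  unfold Complex.GammaSeq
  refine DifferentiableAt.div ?_ (by fun_prop)
    (Finset.prod_ne_zero_iff.2 fun j _ => add_natCast_ne_zero hs j)
  exact (differentiableAt_id.const_cpow (Or.inl (Nat.cast_ne_zero.2 hn))).mul_const _

lemma differentiableAt_Gamma_of_re_pos {s : ℂ} (hs : 0 < s.re) :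
    DifferentiableAt ℂ Complex.Gamma s := by
  refine Complex.differentiableAt_Gamma s fun m hm => add_natCast_ne_zero hs m ?_
  rw [hm]; ring

/-- Euler's limit may be differentiated: Cauchy's formula on a circle inside the right half-plane
expresses the derivatives as integrals, to which dominated convergence applies. -/
lemma tendsto_deriv_GammaSeq {s : ℂ} (hs : 0 < s.re) :
    Filter.Tendsto (fun n : ℕ => deriv (fun z => Complex.GammaSeq z n) s) Filter.atTop
      (nhds (deriv Complex.Gamma s)) := by
  set R := s.re / 2 with hR
  have hR0 : 0 < R := by positivity
  have hball : ∀ z ∈ Metric.closedBall s R, 0 < z.re := fun z hz => by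
    rw [Metric.mem_closedBall, dist_eq_norm] at hz
    have h1 := (abs_le.1 ((Complex.abs_re_le_norm (z - s)).trans hz)).1
    rw [Complex.sub_re] at h1
    linarith
  have hcirc : ∀ θ, circleMap s R θ ∈ Metric.closedBall s R := fun θ =>
    circleMap_mem_closedBall s hR0.le θ
  have hne : ∀ θ, (circleMap s R θ - s) ^ 2 ≠ 0 := fun θ =>
    pow_ne_zero 2 (sub_ne_zero.2 (circleMap_ne_center hR0.ne'))
  have hcont : Continuous fun θ => Real.Gamma (circleMap s R θ).re := by
    rw [continuous_iff_continuousAt]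
    intro θ
    have hpos := hball _ (hcirc θ)
    have hG : ContinuousAt Real.Gamma (circleMap s R θ).re :=
      (Real.differentiableAt_Gamma fun m hm => by
        have : (0 : ℝ) ≤ m := m.cast_nonneg
        linarith).continuousAt
    exact hG.comp (f := fun θ => (circleMap s R θ).re)
      (Complex.continuous_re.comp (continuous_circleMap s R)).continuousAt
  have hlim : Filter.Tendsto
      (fun n : ℕ => ∮ z in C(s, R), (1 / (z - s) ^ 2) • Complex.GammaSeq z n) Filter.atTop
      (nhds (∮ z in C(s, R), (1 / (z - s) ^ 2) • Complex.Gamma z)) := by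
    refine intervalIntegral.tendsto_integral_filter_of_dominated_convergence
      (fun θ => ‖deriv (circleMap s R) θ‖ * (‖1 / (circleMap s R θ - s) ^ 2‖ *
        Real.Gamma (circleMap s R θ).re)) ?_ ?_ ?_ ?_
    · filter_upwards [Filter.eventually_ne_atTop 0] with n hn
      refine Continuous.aestronglyMeasurable ?_
      simp only [deriv_circleMap]
      refine Continuous.fun_smul ((continuous_circleMap 0 R).mul continuous_const)
        (Continuous.fun_smul ?_ ?_)
      · exact continuous_const.div (by fun_prop) hne
      · rw [continuous_iff_continuousAt]
        intro θ
        exact (differentiableAt_GammaSeq (hball _ (hcirc θ)) hn).continuousAt.comp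
          (f := circleMap s R) (continuous_circleMap s R).continuousAt
    · filter_upwards [Filter.eventually_ne_atTop 0] with n hn
      refine Filter.Eventually.of_forall fun θ _ => ?_
      rw [norm_smul, norm_smul]
      gcongr
      exact norm_GammaSeq_le (hball _ (hcirc θ)) hn
    · refine Continuous.intervalIntegrable ?_ _ _
      simp only [deriv_circleMap]
      refine Continuous.mul (by fun_prop) (Continuous.mul (Continuous.norm ?_) hcont)
      exact continuous_const.div (by fun_prop) hne
    · refine Filter.Eventually.of_forall fun θ _ => ?_
      exact ((Complex.GammaSeq_tendsto_Gamma _).const_smul _).const_smul _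
  rw [DifferentiableOn.deriv_eq_smul_circleIntegral hR0 fun z hz =>
    (differentiableAt_Gamma_of_re_pos (hball z hz)).differentiableWithinAt] at hlim
  have h2 := hlim.const_smul (2 * Real.pi * Complex.I : ℂ)⁻¹
  rw [smul_smul, inv_mul_cancel₀ Complex.two_pi_I_ne_zero, one_smul] at h2
  refine h2.congr' ?_
  filter_upwards [Filter.eventually_ne_atTop 0] with n hn
  rw [DifferentiableOn.deriv_eq_smul_circleIntegral hR0 fun z hz =>
    (differentiableAt_GammaSeq (hball z hz) hn).differentiableWithinAt, smul_smul,
    inv_mul_cancel₀ Complex.two_pi_I_ne_zero, one_smul]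

/-- Euler's approximants `log n - ∑_{j ≤ n} 1/(s + j)` to `ψ(s)`, the logarithmic derivatives of
`Complex.GammaSeq`. -/
noncomputable def digammaSeq (n : ℕ) (s : ℂ) : ℂ :=
  Complex.log n - ∑ j ∈ Finset.range (n + 1), 1 / (s + j)

lemma logDeriv_GammaSeq {s : ℂ} (hs : 0 < s.re) {n : ℕ} (hn : n ≠ 0) :
    deriv (fun z => Complex.GammaSeq z n) s / Complex.GammaSeq s n = digammaSeq n s := by
  have hnc : (n : ℂ) ≠ 0 := Nat.cast_ne_zero.2 hn
  have hpow : HasDerivAt (fun z : ℂ => (n : ℂ) ^ z * (n.factorial : ℂ))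
      ((n : ℂ) ^ s * Complex.log n * n.factorial) s := by
    simpa using ((hasDerivAt_id s).const_cpow (Or.inl hnc)).mul_const (n.factorial : ℂ)
  have hp0 : (n : ℂ) ^ s * (n.factorial : ℂ) ≠ 0 :=
    mul_ne_zero (by simp [Complex.cpow_eq_zero_iff, hn]) (Nat.cast_ne_zero.2 n.factorial_ne_zero)
  change logDeriv (fun z => Complex.GammaSeq z n) s = _
  unfold Complex.GammaSeq digammaSeq
  rw [logDeriv_div s hp0 (Finset.prod_ne_zero_iff.2 fun j _ => add_natCast_ne_zero hs j)
    hpow.differentiableAt (by fun_prop), logDeriv_prod (fun j _ => add_natCast_ne_zero hs j)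
    (fun j _ => by fun_prop), logDeriv_apply, hpow.deriv]
  congr 1
  · rw [div_eq_iff hp0]
    ring
  · refine Finset.sum_congr rfl fun j _ => ?_
    rw [logDeriv_apply]
    simp

lemma tendsto_digammaSeq {s : ℂ} (hs : 0 < s.re) :
    Filter.Tendsto (fun n => digammaSeq n s) Filter.atTop (nhds (digamma s)) := by
  refine ((tendsto_deriv_GammaSeq hs).div (Complex.GammaSeq_tendsto_Gamma s)
    (Complex.Gamma_ne_zero_of_re_pos hs)).congr' ?_
  filter_upwards [Filter.eventually_ne_atTop 0] with n hn
  exact logDeriv_GammaSeq hs hn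

/-! ### A uniform bound on the line `Re s = 1` -/

/-- The exponent `3/2` makes the bound summable over `c = 1, 2, …`, while the growth `|r|^(1/2)` in
`r` stays integrable against `1/(r² + d²)`. -/
lemma norm_inv_sub_inv_le {c : ℝ} (hc : 0 < c) (r : ℝ) :
    ‖1 / (c : ℂ) - 1 / ((c : ℂ) + Complex.I * r / 2)‖ ≤
      1 / c ^ (3 / 2 : ℝ) * (1 + r ^ 2) ^ (1 / 4 : ℝ) := by
  have hc32 : c ^ (3 / 2 : ℝ) = c * √c := by
    rw [Real.sqrt_eq_rpow, ← Real.rpow_one_add' hc.le (by norm_num)]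
    norm_num
  have hz : (c : ℂ) + Complex.I * r / 2 ≠ 0 := fun h => hc.ne' (by
    simpa using congrArg Complex.re h)
  have hc' : (c : ℂ) ≠ 0 := Complex.ofReal_ne_zero.2 hc.ne'
  have hx : √|r| ≤ (1 + r ^ 2) ^ (1 / 4 : ℝ) := by
    have h1 : (r ^ 2) ^ (1 / 4 : ℝ) = √|r| := by
      rw [← sq_abs, ← Real.rpow_natCast, ← Real.rpow_mul (abs_nonneg r), Real.sqrt_eq_rpow]
      norm_num
    rw [← h1]
    gcongr
    linarith
  -- `‖c + ir/2‖² = c² + r²/4 ≥ c|r|` by the inequality of the means.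
  have hn : √c * √|r| ≤ ‖(c : ℂ) + Complex.I * r / 2‖ := by
    rw [← Real.sqrt_mul hc.le, Complex.norm_def]
    refine Real.sqrt_le_sqrt ?_
    simp [Complex.normSq_apply]
    nlinarith [sq_nonneg (c - |r| / 2), sq_abs r]
  have he : 1 / (c : ℂ) - 1 / ((c : ℂ) + Complex.I * r / 2) =
      (Complex.I * r / 2) / (c * ((c : ℂ) + Complex.I * r / 2)) := by
    rw [div_sub_div _ _ hc' hz]
    ring
  have hs : 0 < √c := Real.sqrt_pos.2 hc
  rw [he, norm_div, norm_mul, Complex.norm_of_nonneg hc.le, hc32,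
    div_le_iff₀ (mul_pos hc (norm_pos_iff.2 hz))]
  calc ‖Complex.I * r / 2‖ = |r| / 2 := by simp
    _ ≤ √|r| * √|r| := by rw [Real.mul_self_sqrt (abs_nonneg r)]; linarith [abs_nonneg r]
    _ ≤ (1 + r ^ 2) ^ (1 / 4 : ℝ) * √|r| := by gcongr
    _ = 1 / (c * √c) * (1 + r ^ 2) ^ (1 / 4 : ℝ) * (c * (√c * √|r|)) := by field_simp
    _ ≤ _ := by gcongr

/-- A bound uniform in `n`: compare with the convergent, hence bounded, sequence at `s = 1`. -/
lemma exists_norm_digammaSeq_le : ∃ C : ℝ, 0 ≤ C ∧ ∀ (n : ℕ) (r : ℝ),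
    ‖digammaSeq n (1 + Complex.I * r / 2)‖ ≤ C * (1 + r ^ 2) ^ (1 / 4 : ℝ) := by
  have h1 : Filter.Tendsto (fun n => digammaSeq n 1) Filter.atTop (nhds (digamma 1)) :=
    tendsto_digammaSeq (by simp)
  obtain ⟨M, hM⟩ := h1.norm.bddAbove_range
  have hM' : ∀ n, ‖digammaSeq n 1‖ ≤ M := fun n => hM ⟨n, rfl⟩
  have hM0 : 0 ≤ M := (norm_nonneg _).trans (hM' 0)
  have hsum : Summable fun j : ℕ => 1 / ((j + 1 : ℝ)) ^ (3 / 2 : ℝ) := by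
    have := (summable_nat_add_iff 1).2
      (Real.summable_one_div_nat_rpow.2 (by norm_num : (1 : ℝ) < 3 / 2))
    simpa using this
  set S := ∑' j : ℕ, 1 / ((j + 1 : ℝ)) ^ (3 / 2 : ℝ)
  have hS0 : 0 ≤ S := tsum_nonneg fun j => by positivity
  refine ⟨M + S, by positivity, fun n r => ?_⟩
  set x := (1 + r ^ 2) ^ (1 / 4 : ℝ)
  have hx : 1 ≤ x := Real.one_le_rpow (by nlinarith [sq_nonneg r]) (by norm_num)
  have hsplit : digammaSeq n (1 + Complex.I * r / 2) = digammaSeq n 1 +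
      ∑ j ∈ Finset.range (n + 1), (1 / ((j + 1 : ℝ) : ℂ) -
        1 / (((j + 1 : ℝ) : ℂ) + Complex.I * r / 2)) := by
    unfold digammaSeq
    rw [Finset.sum_sub_distrib]
    have e1 : ∀ j : ℕ, ((j + 1 : ℝ) : ℂ) = 1 + j := fun j => by push_cast; ring
    have e2 : ∀ j : ℕ, (1 + Complex.I * r / 2 + j : ℂ) = 1 + j + Complex.I * r / 2 :=
      fun j => by ring
    simp only [e1, e2]
    ring
  rw [hsplit]
  calc _ ≤ ‖digammaSeq n 1‖ + ∑ j ∈ Finset.range (n + 1), 1 / ((j + 1 : ℝ)) ^ (3 / 2 : ℝ) * x :=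
        (norm_add_le _ _).trans (add_le_add_right ((norm_sum_le _ _).trans
          (Finset.sum_le_sum fun j _ => norm_inv_sub_inv_le (by positivity) r)) _)
    _ ≤ M * x + S * x := by
        rw [← Finset.sum_mul]
        gcongr
        · exact (hM' n).trans (le_mul_of_one_le_right hM0 hx)
        · exact hsum.sum_le_tsum _ fun j _ => by positivity
    _ = (M + S) * x := by ring

/-! ### Passage to the limit -/

lemma integrable_kernel {d : ℝ} (hd : 0 < d) :
    Integrable fun r : ℝ => ((1 / (r ^ 2 + d ^ 2) : ℝ) : ℂ) :=
  (integrable_one_div_sq_add_sq hd).ofReal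

lemma kernel_mul_digammaSeq (d : ℝ) (n : ℕ) (r : ℝ) :
    ((1 / (r ^ 2 + d ^ 2) : ℝ) : ℂ) * digammaSeq n (1 + Complex.I * r / 2) =
      ((1 / (r ^ 2 + d ^ 2) : ℝ) : ℂ) * Complex.log n -
        ∑ j ∈ Finset.range (n + 1), ((1 / (r ^ 2 + d ^ 2) : ℝ) : ℂ) *
          (1 / (((j + 1 : ℝ) : ℂ) + Complex.I * r / 2)) := by
  unfold digammaSeq
  rw [mul_sub, Finset.mul_sum]
  congr 1
  refine Finset.sum_congr rfl fun j _ => ?_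
  push_cast
  ring

lemma integrable_kernel_mul_digammaSeq {d : ℝ} (hd : 0 < d) (n : ℕ) :
    Integrable fun r : ℝ =>
      ((1 / (r ^ 2 + d ^ 2) : ℝ) : ℂ) * digammaSeq n (1 + Complex.I * r / 2) := by
  simp_rw [kernel_mul_digammaSeq]
  exact ((integrable_kernel hd).mul_const _).sub
    (integrable_finsetSum _ fun j _ => integrable_kernel_mul_pole hd (by positivity))

/-- The Poisson formula at `d` for the approximants of `w ↦ ψ(1 + w/2)`. -/
lemma integral_kernel_mul_digammaSeq {d : ℝ} (hd : 0 < d) (n : ℕ) :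
    ∫ r : ℝ, ((1 / (r ^ 2 + d ^ 2) : ℝ) : ℂ) * digammaSeq n (1 + Complex.I * r / 2) =
      Real.pi / d * digammaSeq n ((1 + d / 2 : ℝ) : ℂ) := by
  have hpole : ∀ j ∈ Finset.range (n + 1), Integrable fun r : ℝ =>
      ((1 / (r ^ 2 + d ^ 2) : ℝ) : ℂ) * (1 / (((j + 1 : ℝ) : ℂ) + Complex.I * r / 2)) :=
    fun j _ => integrable_kernel_mul_pole hd (by positivity)
  simp_rw [kernel_mul_digammaSeq]
  rw [integral_sub ((integrable_kernel hd).mul_const _) (integrable_finsetSum _ hpole),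
    integral_finsetSum _ hpole, integral_mul_const, integral_complex_ofReal,
    integral_one_div_sq_add_sq hd]
  unfold digammaSeq
  rw [mul_sub, Finset.mul_sum, Complex.ofReal_div]
  congr 1
  refine Finset.sum_congr rfl fun j _ => ?_
  rw [integral_kernel_mul_pole hd (by positivity)]
  push_cast
  ring

lemma one_div_sq_add_sq_le {d : ℝ} (hd : 0 < d) (r : ℝ) :
    1 / (r ^ 2 + d ^ 2) ≤ (1 + 1 / d ^ 2) * (1 + r ^ 2)⁻¹ := by
  rw [← div_eq_mul_inv, div_le_div_iff₀ (by positivity) (by positivity)]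
  have h1 : 1 / d ^ 2 * d ^ 2 = 1 := by field_simp
  have h2 : 0 ≤ 1 / d ^ 2 * r ^ 2 := by positivity
  nlinarith [sq_nonneg d]

lemma tendsto_integral_kernel_mul_digammaSeq {a δ : ℝ} (ha : 0 < a) (hδ : 0 < δ) :
    Filter.Tendsto (fun n : ℕ => ∫ r : ℝ, ((1 / (r ^ 2 + δ ^ 2) - 1 / (r ^ 2 + a ^ 2) : ℝ) : ℂ) *
        digammaSeq n (1 + Complex.I * (r : ℂ) / 2)) Filter.atTop
      (nhds (∫ r : ℝ, ((1 / (r ^ 2 + δ ^ 2) - 1 / (r ^ 2 + a ^ 2) : ℝ) : ℂ) *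
        digamma (1 + Complex.I * (r : ℂ) / 2))) := by
  obtain ⟨C, hC0, hC⟩ := exists_norm_digammaSeq_le
  have hint : Integrable fun r : ℝ => (1 + r ^ 2) ^ (-(3 / 2 : ℝ) / 2) := by
    have := integrable_rpow_neg_one_add_norm_sq (E := ℝ) (μ := volume) (r := 3 / 2)
      (by simp; norm_num)
    simpa only [Real.norm_eq_abs, sq_abs] using this
  set K : ℝ := (1 + 1 / δ ^ 2) + (1 + 1 / a ^ 2)
  refine tendsto_integral_of_dominated_convergence
    (fun r => K * C * (1 + r ^ 2) ^ (-(3 / 2 : ℝ) / 2)) (fun n => ?_) (hint.const_mul _)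
    (fun n => Filter.Eventually.of_forall fun r => ?_) (Filter.Eventually.of_forall fun r => ?_)
  · simp_rw [Complex.ofReal_sub, sub_mul]
    exact ((integrable_kernel_mul_digammaSeq hδ n).sub
      (integrable_kernel_mul_digammaSeq ha n)).aestronglyMeasurable
  · have hp : 0 < 1 + r ^ 2 := by positivity
    have hk : |1 / (r ^ 2 + δ ^ 2) - 1 / (r ^ 2 + a ^ 2)| ≤ K * (1 + r ^ 2)⁻¹ := by
      refine (abs_sub _ _).trans ?_
      rw [abs_of_nonneg (by positivity), abs_of_nonneg (by positivity), add_mul]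
      exact add_le_add (one_div_sq_add_sq_le hδ r) (one_div_sq_add_sq_le ha r)
    have he : (1 + r ^ 2) ^ (-(3 / 2 : ℝ) / 2) = (1 + r ^ 2)⁻¹ * (1 + r ^ 2) ^ (1 / 4 : ℝ) := by
      rw [← Real.rpow_neg_one, ← Real.rpow_add hp]
      norm_num
    rw [norm_mul, Complex.norm_real, Real.norm_eq_abs, he]
    calc _ ≤ (K * (1 + r ^ 2)⁻¹) * (C * (1 + r ^ 2) ^ (1 / 4 : ℝ)) := by
          gcongr
          exact hC n r
      _ = _ := by ring
  · exact (tendsto_digammaSeq (by simp)).const_mul _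

/-- For all real `a > 0` and `δ > 0`,
`(1/(4π)) ∫ (1/(r²+δ²) - 1/(r²+a²)) ψ(1+ir/2) dr
  = (1/4)(ψ(1+δ/2)/δ - ψ(1+a/2)/a)`,
the equality holding in `ℂ` (both sides being real numbers). -/
theorem statement15 (a δ : ℝ) (ha : 0 < a) (hδ : 0 < δ) :
    (1 / (4 * (Real.pi : ℂ))) *
        ∫ r : ℝ, ((1 / (r ^ 2 + δ ^ 2) - 1 / (r ^ 2 + a ^ 2) : ℝ) : ℂ) *
          digamma (1 + Complex.I * (r : ℂ) / 2) =
      (1 / 4 : ℂ) * (digamma ((1 + δ / 2 : ℝ) : ℂ) / (δ : ℂ)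
        - digamma ((1 + a / 2 : ℝ) : ℂ) / (a : ℂ)) := by
  have hval : ∀ n : ℕ, ∫ r : ℝ, ((1 / (r ^ 2 + δ ^ 2) - 1 / (r ^ 2 + a ^ 2) : ℝ) : ℂ) *
        digammaSeq n (1 + Complex.I * (r : ℂ) / 2) =
      Real.pi / δ * digammaSeq n ((1 + δ / 2 : ℝ) : ℂ) -
        Real.pi / a * digammaSeq n ((1 + a / 2 : ℝ) : ℂ) := fun n => by
    simp_rw [Complex.ofReal_sub, sub_mul]
    rw [integral_sub (integrable_kernel_mul_digammaSeq hδ n)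
      (integrable_kernel_mul_digammaSeq ha n), integral_kernel_mul_digammaSeq hδ,
      integral_kernel_mul_digammaSeq ha]
  have hpt : ∀ d : ℝ, 0 < d → Filter.Tendsto
      (fun n => (Real.pi / d : ℂ) * digammaSeq n ((1 + d / 2 : ℝ) : ℂ)) Filter.atTop
      (nhds (Real.pi / d * digamma ((1 + d / 2 : ℝ) : ℂ))) := fun d hd =>
    (tendsto_digammaSeq (by rw [Complex.ofReal_re]; positivity)).const_mul _
  have hlim := tendsto_integral_kernel_mul_digammaSeq ha hδ
  simp_rw [hval] at hlim
  rw [tendsto_nhds_unique hlim ((hpt δ hδ).sub (hpt a ha))]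
  have hpi : (Real.pi : ℂ) ≠ 0 := Complex.ofReal_ne_zero.2 Real.pi_ne_zero
  field_simp
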